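/- Let μ be a Borel probability measure on SL₂(ℝ) with a finite exponential moment whose support generates a Zariski dense subgroup, and let ν be the unique μ-stationary measure on X = ℙ(ℝ²). Then for every real t > 0 and every continuous function f on X, both series below converge and ∫_X f(x) dν(x) = ∫_X [ Σ_{n≥1} ∫_{G^n} ( 1{κ(g₁⋯g_{n−1}) < t ≤ κ(g₁⋯g_n)} − 1{κ(g₁⋯g_{n−1}) ≥ t > κ(g₁⋯g_n)} ) f(g₁⋯g_n x) dμ(g₁)⋯dμ(g_n) ] dν(x), where the empty product (n−1 = 0) is the identity matrix, whose Cartan projection is 0. -/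

import Mathlib

open MeasureTheory Filter

noncomputable section

abbrev SL2 := Matrix.SpecialLinearGroup (Fin 2) ℝ

abbrev PX := Projectivization ℝ (Fin 2 → ℝ)

instance : TopologicalSpace SL2 := instTopologicalSpaceSubtype
instance : TopologicalSpace PX := instTopologicalSpaceQuotient
instance : MeasurableSpace SL2 := borel _
instance : MeasurableSpace PX := borel _

/-- Euclidean norm on ℝ². -/
def enorm2 (v : Fin 2 → ℝ) : ℝ := Real.sqrt (v 0 ^ 2 + v 1 ^ 2)

/-- Operator norm of g ∈ SL₂(ℝ) w.r.t. the Euclidean norm on ℝ². -/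
def opNorm (g : SL2) : ℝ :=
  ‖Matrix.toEuclideanCLM (𝕜 := ℝ) (n := Fin 2) (g : Matrix (Fin 2) (Fin 2) ℝ)‖

/-- Cartan projection κ(g) = log ‖g‖. -/
def kappa (g : SL2) : ℝ := Real.log (opNorm g)

/-- The projective action of SL₂(ℝ) on ℙ(ℝ²). -/
def act (g : SL2) (x : PX) : PX :=
  Projectivization.map ((Matrix.SpecialLinearGroup.toLin' g).toLinearMap)
    (LinearEquiv.injective _) x

/-- The norm cocycle σ(g, ℝv) = log (‖gv‖/‖v‖). -/
def cocycle (g : SL2) (x : PX) : ℝ :=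
  Real.log (enorm2 ((g : Matrix (Fin 2) (Fin 2) ℝ).mulVec x.rep) / enorm2 x.rep)

/-- The sine distance d(ℝv, ℝw) = |det(v,w)|/(‖v‖‖w‖) on ℙ(ℝ²). -/
def projDist (x y : PX) : ℝ :=
  |x.rep 0 * y.rep 1 - x.rep 1 * y.rep 0| / (enorm2 x.rep * enorm2 y.rep)

/-- An angle θ(x) ∈ ℝ representing x = ℝ(cos θ, sin θ). -/
def pangle (x : PX) : ℝ := Complex.arg (x.rep 0 + x.rep 1 * Complex.I)

/-- The (topological) support of a measure. -/
def measSupp (μ : Measure SL2) : Set SL2 :=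
  {g | ∀ U : Set SL2, IsOpen U → g ∈ U → 0 < μ U}

/-- μ has a finite exponential moment. -/
def HasExpMoment (μ : Measure SL2) : Prop :=
  ∃ ε₁ > (0 : ℝ), ∫⁻ g, ENNReal.ofReal (opNorm g ^ ε₁) ∂μ < ⊤

/-- The group generated by the support of μ is Zariski dense in SL₂(ℝ),
equivalently it is not solvable. -/
def ZariskiDense (μ : Measure SL2) : Prop :=
  ¬ IsSolvable (Subgroup.closure (measSupp μ))

/-- ν is μ-stationary: μ ∗ ν = ν. -/
def IsMuStationary (μ : Measure SL2) (ν : Measure PX) : Prop :=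
  μ.bind (fun g => ν.map (act g)) = ν

/-- The product g₁ ⋯ gₙ of a word (g₁, …, gₙ). -/
def word {n : ℕ} (g : Fin n → SL2) : SL2 := (List.ofFn g).prod

/-- The product measure μ^{⊗n} on words of length n. -/
def μpi (μ : Measure SL2) (n : ℕ) : Measure (Fin n → SL2) := Measure.pi fun _ => μ

open ProbabilityTheory Topology BoundedContinuousFunction

/-!
Write `Pf g = ∫ f d(gν)`, so that `Pf 1 = ∫ f dν`. Stationarity of `ν` says that `Pf` is harmonic
for the right random walk `g₁ ⋯ gₙ`. Hence the `ν`-average of the `n`-th exit term minus the `n`-th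
return term of `A = {κ < t}` is `aₙ₋₁ - aₙ`, where `aₙ` is the integral of `Pf` over the part of the
law of `g₁ ⋯ gₙ` inside `A`. The sum telescopes to `a₀ = Pf 1` provided the masses of `A` under
these laws are summable, and `A` is contained in a compact set.

This transience comes from the bounded martingales `Pf (g₁ ⋯ gₙ)`: their increments are orthogonal,
so the expected conditional variances are summable, while around every `s` some `f` gives a
conditional variance bounded away from `0`, because some `g` in the support of `μ` moves `ν`.

Such a `g` exists because the stabilizer of `ν` in `SL₂(ℝ)` is solvable. If it is compact, it
commutes with a Haar average of conjugates of a rotation, hence is abelian. Otherwise a sequence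
going to infinity in it contracts the complement of a point to a point, so `ν` has an atom of mass
at least `1 / 2`; the commutator subgroup of the stabilizer fixes this atom, and point stabilizers
are solvable.
-/

/-! ### Random walks and harmonic functions -/

theorem prod_ofFn_eq_init_mul_last {M : Type*} [Monoid M] {n : ℕ} (g : Fin (n + 1) → M) :
    (List.ofFn g).prod = (List.ofFn (g ∘ Fin.castSucc)).prod * g (Fin.last n) := by
  rw [List.ofFn_succ', List.concat_eq_append, List.prod_append, List.prod_singleton]
  rfl

theorem measurable_prod_ofFn {M : Type*} [Monoid M] [MeasurableSpace M] [MeasurableMul₂ M]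
    (n : ℕ) : Measurable fun g : Fin n → M => (List.ofFn g).prod := by
  induction n with
  | zero => simpa only [List.ofFn_zero, List.prod_nil] using measurable_const
  | succ n ih =>
    simp only [prod_ofFn_eq_init_mul_last]
    exact (ih.comp (by fun_prop)).mul (measurable_pi_apply _)

/-- The law of the product `g₁ ⋯ gₙ` of `n` independent `μ`-distributed factors. -/
def walkLaw {M : Type*} [Monoid M] [MeasurableSpace M] (μ : Measure M) (n : ℕ) : Measure M :=
  (Measure.pi fun _ : Fin n => μ).map fun g => (List.ofFn g).prod

section RandomWalk

variable {M : Type*} [Monoid M] [MeasurableSpace M] (μ : Measure M) [IsProbabilityMeasure μ]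

theorem walkLaw_zero : walkLaw μ 0 = Measure.dirac 1 := by
  simp only [walkLaw, List.ofFn_zero, List.prod_nil, Measure.map_const, measure_univ, one_smul]

variable [MeasurableMul₂ M]

instance isProbabilityMeasure_walkLaw (n : ℕ) : IsProbabilityMeasure (walkLaw μ n) :=
  Measure.isProbabilityMeasure_map (measurable_prod_ofFn n).aemeasurable

theorem measurePreserving_prod_init_last (n : ℕ) :
    MeasurePreserving
      (fun g : Fin (n + 1) → M => ((List.ofFn (g ∘ Fin.castSucc)).prod, g (Fin.last n)))
      (Measure.pi fun _ => μ) ((walkLaw μ n).prod μ) := by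
  have split := measurePreserving_piFinSuccAbove (fun _ : Fin (n + 1) => μ) (Fin.last n)
  have multiply : MeasurePreserving (fun g : Fin n → M => (List.ofFn g).prod)
      (Measure.pi fun _ => μ) (walkLaw μ n) := ⟨measurable_prod_ofFn n, rfl⟩
  have joint := Measure.measurePreserving_swap.comp
    (((MeasurePreserving.id μ).prod multiply).comp split)
  convert joint using 1
  funext g
  simp only [Function.comp_apply, MeasurableEquiv.piFinSuccAbove_apply,
    Fin.insertNthEquiv_symm_apply, Prod.map, Prod.swap_prod_mk, Fin.removeNth_last, id]
  rfl

theorem walkLaw_succ (n : ℕ) : walkLaw μ (n + 1) = walkLaw μ n ∗ₘ μ := by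
  rw [Measure.mconv, ← (measurePreserving_prod_init_last μ n).map_eq,
    Measure.map_map measurable_mul (measurePreserving_prod_init_last μ n).measurable, walkLaw]
  simp only [prod_ofFn_eq_init_mul_last, Function.comp_def]

theorem setIntegral_prod_init {B : Set M} (hB : MeasurableSet B) {h : M → ℝ}
    (hh : Integrable h (walkLaw μ (n + 1))) :
    ∫ g in {g : Fin (n + 1) → M | (List.ofFn (g ∘ Fin.castSucc)).prod ∈ B},
        h (List.ofFn g).prod ∂(Measure.pi fun _ => μ) =
      ∫ s in B, ∫ g, h (s * g) ∂μ ∂(walkLaw μ n) := by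
  have joint := measurePreserving_prod_init_last μ n
  rw [walkLaw_succ, Measure.mconv] at hh
  have hh_mul : Integrable (fun p : M × M => h (p.1 * p.2)) ((walkLaw μ n).prod μ) :=
    (integrable_map_measure hh.1 measurable_mul.aemeasurable).1 hh
  calc
    _ = ∫ p in B ×ˢ Set.univ, h (p.1 * p.2) ∂((walkLaw μ n).prod μ) := by
      rw [← joint.map_eq, setIntegral_map (hB.prod .univ) (joint.map_eq ▸ hh_mul.1)
        joint.measurable.aemeasurable]
      simp only [prod_ofFn_eq_init_mul_last, Set.prod_univ]
      rfl
    _ = _ := by rw [setIntegral_prod _ hh_mul.integrableOn]; simp only [Measure.restrict_univ]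

end RandomWalk

/-- `h` is `μ`-harmonic: it is its own average along the right random walk `s ↦ s * g`. -/
def IsHarmonicFor {M : Type*} [Monoid M] [MeasurableSpace M] (μ : Measure M) (h : M → ℝ) :
    Prop :=
  ∀ s, ∫ g, h (s * g) ∂μ = h s

theorem IsHarmonicFor.setIntegral_exit_sub_return {M : Type*} [Monoid M] [MeasurableSpace M]
    [MeasurableMul₂ M] {μ : Measure M} [IsProbabilityMeasure μ] {h : M → ℝ} (hh : IsHarmonicFor μ h)
    (h_int : ∀ n, Integrable h (walkLaw μ n)) {A : Set M} (hA : MeasurableSet A) (n : ℕ) :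
    ∫ g in {g : Fin (n + 1) → M |
          (List.ofFn (g ∘ Fin.castSucc)).prod ∈ A ∧ (List.ofFn g).prod ∈ Aᶜ},
        h (List.ofFn g).prod ∂(Measure.pi fun _ => μ) -
      ∫ g in {g : Fin (n + 1) → M |
          (List.ofFn (g ∘ Fin.castSucc)).prod ∈ Aᶜ ∧ (List.ofFn g).prod ∈ A},
        h (List.ofFn g).prod ∂(Measure.pi fun _ => μ) =
      ∫ s in A, h s ∂(walkLaw μ n) - ∫ s in A, h s ∂(walkLaw μ (n + 1)) := by
  set P := {g : Fin (n + 1) → M | (List.ofFn (g ∘ Fin.castSucc)).prod ∈ A}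
  set Q := {g : Fin (n + 1) → M | (List.ofFn g).prod ∈ A}
  set π : Measure (Fin (n + 1) → M) := Measure.pi fun _ => μ
  have hP : MeasurableSet P := (measurable_prod_ofFn n).comp (by fun_prop) hA
  have hQ : MeasurableSet Q := measurable_prod_ofFn (n + 1) hA
  have product_int : Integrable (fun g => h (List.ofFn g).prod) π :=
    (h_int (n + 1)).comp_measurable (measurable_prod_ofFn _)
  have start_in : ∫ g in P, h (List.ofFn g).prod ∂π = ∫ s in A, h s ∂(walkLaw μ n) := by
    rw [setIntegral_prod_init μ hA (h_int (n + 1))]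
    simp only [hh _]
  have end_in : ∫ g in Q, h (List.ofFn g).prod ∂π = ∫ s in A, h s ∂(walkLaw μ (n + 1)) :=
    (setIntegral_map hA (h_int (n + 1)).1 (measurable_prod_ofFn _).aemeasurable).symm
  have split_start := integral_inter_add_sdiff (s := P) hQ product_int.integrableOn
  have split_end := integral_inter_add_sdiff (s := Q) hP product_int.integrableOn
  rw [Set.inter_comm] at split_end
  have exit_set : {g : Fin (n + 1) → M |
      (List.ofFn (g ∘ Fin.castSucc)).prod ∈ A ∧ (List.ofFn g).prod ∈ Aᶜ} = P \ Q := rfl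
  have return_set : {g : Fin (n + 1) → M |
      (List.ofFn (g ∘ Fin.castSucc)).prod ∈ Aᶜ ∧ (List.ofFn g).prod ∈ A} = Q \ P :=
    Set.inter_comm _ _
  rw [exit_set, return_set]
  linarith

section Harmonic

variable {M : Type*} [Monoid M] [TopologicalSpace M] [ContinuousMul M]
  [MeasurableSpace M] [BorelSpace M]
  {μ : Measure M} [IsProbabilityMeasure μ] {h : M →ᵇ ℝ}

theorem memLp_comp_mul_left (h : M →ᵇ ℝ) (s : M) (p : ENNReal) :
    MemLp (fun g => h (s * g)) p μ :=
  .of_bound (h.continuous.comp (continuous_const_mul s)).aestronglyMeasurable ‖h‖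
    (.of_forall fun _ => h.norm_coe_le_norm _)

theorem IsHarmonicFor.variance_eq (hh : IsHarmonicFor μ h) (s : M) :
    Var[fun g => h (s * g); μ] = ∫ g, (h ^ 2) (s * g) ∂μ - (h ^ 2) s := by
  simp only [variance_eq_sub (memLp_comp_mul_left h s 2), hh s, Pi.pow_apply, coe_pow]

theorem IsHarmonicFor.variance_pos (hh : IsHarmonicFor μ h) {s g : M} (hg : g ∈ μ.support)
    (hne : h (s * g) ≠ h s) : 0 < Var[fun g => h (s * g); μ] := by
  refine (variance_nonneg _ _).lt_of_ne' fun hvar => ?_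
  have const_ae := ae_eq_integral_of_variance_eq_zero (memLp_comp_mul_left h s 2) hvar
  rw [hh s] at const_ae
  have hU : {g | h (s * g) ≠ h s} ∈ 𝓝 g :=
    (h.continuous.comp (continuous_const_mul s)).continuousAt.eventually_ne hne
  exact (((Measure.mem_support_iff_forall g).1 hg _ hU).ne') (ae_iff.1 const_ae)

variable [SecondCountableTopology M]

theorem continuous_integral_mul_right (k : M →ᵇ ℝ) :
    Continuous fun s => ∫ g, k (s * g) ∂μ :=
  continuous_of_dominated (bound := fun _ => ‖k‖)
    (fun s => (k.continuous.comp (continuous_const_mul s)).aestronglyMeasurable)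
    (fun s => .of_forall fun g => k.norm_coe_le_norm _) (integrable_const _)
    (.of_forall fun _ => by fun_prop)

theorem integrable_integral_mul_right (k : M →ᵇ ℝ) (m : Measure M) [IsFiniteMeasure m] :
    Integrable (fun s => ∫ g, k (s * g) ∂μ) m :=
  .of_bound (continuous_integral_mul_right k).aestronglyMeasurable ‖k‖ <| .of_forall fun s => by
    simpa only [probReal_univ, mul_one] using norm_integral_le_of_norm_le_const (μ := μ)
      (.of_forall fun g => k.norm_coe_le_norm (s * g))

namespace IsHarmonicFor

theorem continuous_variance (hh : IsHarmonicFor μ h) :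
    Continuous fun s => Var[fun g => h (s * g); μ] := by
  simp only [hh.variance_eq]
  exact (continuous_integral_mul_right _).sub (h ^ 2).continuous

theorem integrable_variance (hh : IsHarmonicFor μ h) (m : Measure M) [IsFiniteMeasure m] :
    Integrable (fun s => Var[fun g => h (s * g); μ]) m := by
  simp only [hh.variance_eq]
  exact (integrable_integral_mul_right _ m).sub ((h ^ 2).integrable m)

theorem integral_variance_walkLaw (hh : IsHarmonicFor μ h) (n : ℕ) :
    ∫ s, Var[fun g => h (s * g); μ] ∂(walkLaw μ n) =
      ∫ s, (h ^ 2) s ∂(walkLaw μ (n + 1)) - ∫ s, (h ^ 2) s ∂(walkLaw μ n) := by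
  simp only [hh.variance_eq]
  rw [integral_sub (integrable_integral_mul_right _ _) ((h ^ 2).integrable _), walkLaw_succ,
    integral_mconv ((h ^ 2).integrable _)]

/-- Since martingale increments are orthogonal, the sum telescopes to second moments of `h`. -/
theorem summable_integral_variance (hh : IsHarmonicFor μ h) :
    Summable fun n => ∫ s, Var[fun g => h (s * g); μ] ∂(walkLaw μ n) := by
  refine summable_of_sum_range_le (c := ‖h ^ 2‖)
    (fun n => integral_nonneg fun s => variance_nonneg _ _) fun n => ?_
  calc
    _ = ∫ s, (h ^ 2) s ∂(walkLaw μ n) - ∫ s, (h ^ 2) s ∂(walkLaw μ 0) := by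
      simp only [hh.integral_variance_walkLaw]
      exact Finset.sum_range_sub (fun n => ∫ s, (h ^ 2) s ∂(walkLaw μ n)) n
    _ ≤ ∫ s, (h ^ 2) s ∂(walkLaw μ n) := sub_le_self _ (integral_nonneg fun s => sq_nonneg (h s))
    _ ≤ ‖h ^ 2‖ := (le_abs_self _).trans (norm_integral_le_norm (walkLaw μ n) (h ^ 2))

theorem exists_mem_nhds_summable_walkLaw (hh : IsHarmonicFor μ h) {s : M}
    (hs : 0 < Var[fun g => h (s * g); μ]) :
    ∃ U ∈ 𝓝 s, Summable fun n => (walkLaw μ n).real U := by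
  set energy := fun r => Var[fun g => h (r * g); μ]
  refine ⟨{r | energy s / 2 ≤ energy r}, ?_, ?_⟩
  · filter_upwards [hh.continuous_variance.continuousAt.eventually_const_lt (half_lt_self hs)]
      with r hr using hr.le
  · refine .of_nonneg_of_le (fun n => measureReal_nonneg) (fun n => ?_)
      (hh.summable_integral_variance.mul_left (energy s / 2)⁻¹)
    rw [le_inv_mul_iff₀ (half_pos hs)]
    exact mul_meas_ge_le_integral_of_nonneg (.of_forall fun r => variance_nonneg _ _)
      (hh.integrable_variance _) _

end IsHarmonicFor

theorem summable_walkLaw_of_isCompact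
    (hμ : ∀ s, ∃ h : M →ᵇ ℝ, IsHarmonicFor μ h ∧ 0 < Var[fun g => h (s * g); μ])
    {K : Set M} (hK : IsCompact K) : Summable fun n => (walkLaw μ n).real K := by
  refine hK.induction_on (by simpa only [measureReal_empty] using summable_zero)
    (fun s t hst ht =>
      .of_nonneg_of_le (fun _ => measureReal_nonneg) (fun _ => measureReal_mono hst) ht)
    (fun s t hs ht => .of_nonneg_of_le (fun _ => measureReal_nonneg)
      (fun _ => measureReal_union_le _ _) (hs.add ht)) fun s _ => ?_
  obtain ⟨h, hh, hs⟩ := hμ s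
  obtain ⟨U, hU, hsum⟩ := hh.exists_mem_nhds_summable_walkLaw hs
  exact ⟨U, mem_nhdsWithin_of_mem_nhds hU, hsum⟩

end Harmonic

section Poisson

variable {M X : Type*} [Monoid M] [TopologicalSpace M] [FirstCountableTopology M]
  [MulAction M X] [TopologicalSpace X] [ContinuousSMul M X] [MeasurableSpace X] [BorelSpace X]

/-- The Poisson transform `g ↦ ∫ f d(g ν)` of a bounded continuous function `f`. -/
def poissonTransform (ν : Measure X) [IsProbabilityMeasure ν] (f : X →ᵇ ℝ) : M →ᵇ ℝ :=
  .ofNormedAddCommGroup (fun g => ∫ x, f (g • x) ∂ν)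
    (continuous_of_dominated (bound := fun _ => ‖f‖)
      (fun g => (f.continuous.comp (continuous_const_smul g)).aestronglyMeasurable)
      (fun g => .of_forall fun x => f.norm_coe_le_norm _) (integrable_const _)
      (.of_forall fun _ => by fun_prop))
    ‖f‖ fun g => by
      simpa only [probReal_univ, mul_one] using norm_integral_le_of_norm_le_const (μ := ν)
        (.of_forall fun x => f.norm_coe_le_norm (g • x))

variable {ν : Measure X} [IsProbabilityMeasure ν]

theorem poissonTransform_apply (f : X →ᵇ ℝ) (g : M) :
    poissonTransform ν f g = ∫ x, f (g • x) ∂ν := rfl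

theorem map_smul_eq_iff [HasOuterApproxClosed X] {g : M} :
    ν.map (g • ·) = ν ↔ ∀ f : X →ᵇ ℝ, poissonTransform ν f g = poissonTransform ν f (1 : M) := by
  have measurable_smul : Measurable fun x : X => g • x := (continuous_const_smul g).measurable
  have : IsProbabilityMeasure (ν.map (g • ·)) :=
    Measure.isProbabilityMeasure_map measurable_smul.aemeasurable
  have integral_map_smul (f : X →ᵇ ℝ) : ∫ x, f x ∂(ν.map (g • ·)) = poissonTransform ν f g :=
    integral_map measurable_smul.aemeasurable f.continuous.aestronglyMeasurable
  have transform_one (f : X →ᵇ ℝ) : poissonTransform ν f (1 : M) = ∫ x, f x ∂ν := by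
    simp only [poissonTransform_apply, one_smul]
  simp only [← integral_map_smul, transform_one]
  exact ⟨fun h f => by rw [h], ext_of_forall_integral_eq_of_IsFiniteMeasure⟩

end Poisson

section Stationary

theorem bind_map_smul_eq_map_prod {M X : Type*} [MeasurableSpace M] [MeasurableSpace X]
    [SMul M X] [MeasurableSMul₂ M X] (μ : Measure M) (ν : Measure X) [SFinite ν] :
    μ.bind (fun g => ν.map (g • ·)) = (μ.prod ν).map fun p => p.1 • p.2 := by
  have measurable_smul_uncurry : Measurable fun p : M × X => p.1 • p.2 := by fun_prop
  have map_smul_apply (g : M) {s : Set X} (hs : MeasurableSet s) :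
      ν.map (g • ·) s = ν (Prod.mk g ⁻¹' ((fun p : M × X => p.1 • p.2) ⁻¹' s)) :=
    Measure.map_apply (measurable_const_smul g) hs
  have measurable_kernel : Measurable fun g : M => ν.map (g • ·) :=
    Measure.measurable_of_measurable_coe _ fun s hs => by
      simpa only [map_smul_apply _ hs] using
        measurable_measure_prodMk_left (measurable_smul_uncurry hs)
  ext s hs
  rw [Measure.bind_apply hs measurable_kernel.aemeasurable,
    Measure.map_apply measurable_smul_uncurry hs,
    Measure.prod_apply (measurable_smul_uncurry hs)]
  simp only [map_smul_apply _ hs]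

variable {M X : Type*} [Monoid M] [TopologicalSpace M] [SecondCountableTopology M]
  [MeasurableSpace M] [BorelSpace M]
  [MulAction M X] [TopologicalSpace X] [ContinuousSMul M X] [MeasurableSpace X] [BorelSpace X]
  {μ : Measure M} [IsProbabilityMeasure μ] {ν : Measure X} [IsProbabilityMeasure ν]

theorem isHarmonicFor_poissonTransform (hν : μ.bind (fun g => ν.map (g • ·)) = ν) (f : X →ᵇ ℝ) :
    IsHarmonicFor μ (poissonTransform ν f : M →ᵇ ℝ) := by
  intro s
  have measurable_translate : Measurable fun x => f (s • x) :=
    (f.continuous.comp (continuous_const_smul s)).measurable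
  have integrable_prod : Integrable (fun p : M × X => f (s • p.1 • p.2)) (μ.prod ν) :=
    .of_bound (measurable_translate.comp MeasurableSMul₂.measurable_smul).aestronglyMeasurable ‖f‖
      (.of_forall fun p => f.norm_coe_le_norm _)
  simp only [poissonTransform_apply, mul_smul]
  calc
    ∫ g, ∫ x, f (s • g • x) ∂ν ∂μ = ∫ p : M × X, f (s • p.1 • p.2) ∂(μ.prod ν) :=
      (integral_prod _ integrable_prod).symm
    _ = ∫ x, f (s • x) ∂((μ.prod ν).map fun p => p.1 • p.2) :=
      (integral_map (by fun_prop) measurable_translate.aestronglyMeasurable).symm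
    _ = ∫ x, f (s • x) ∂ν := by rw [← bind_map_smul_eq_map_prod, hν]

end Stationary

section Group

variable {G X : Type*} [Group G] [TopologicalSpace G] [SecondCountableTopology G]
  [MulAction G X] [TopologicalSpace X] [ContinuousSMul G X] [HasOuterApproxClosed X]
  [MeasurableSpace X] [BorelSpace X] {ν : Measure X} [IsProbabilityMeasure ν]

theorem exists_poissonTransform_mul_ne {g : G} (hg : ν.map (g • ·) ≠ ν)
    (s : G) :
    ∃ f : X →ᵇ ℝ, poissonTransform ν f (s * g) ≠ poissonTransform ν f s := by
  rw [Ne, map_smul_eq_iff, not_forall] at hg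
  obtain ⟨f, hf⟩ := hg
  refine ⟨f.compContinuous ⟨(s⁻¹ • ·), continuous_const_smul _⟩, ?_⟩
  simpa only [poissonTransform_apply, compContinuous_apply, ContinuousMap.coe_mk, mul_smul,
    inv_smul_smul, one_smul] using hf

theorem isClosed_setOf_map_smul_eq : IsClosed {g : G | ν.map (g • ·) = ν} := by
  simp only [map_smul_eq_iff, Set.ofPred_forall]
  exact isClosed_iInter fun f => isClosed_eq (poissonTransform ν f).continuous continuous_const

variable [ContinuousMul G] [MeasurableSpace G] [BorelSpace G] {μ : Measure G}
  [IsProbabilityMeasure μ]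

theorem summable_walkLaw_of_map_smul_ne (hν : μ.bind (fun g => ν.map (g • ·)) = ν)
    {g : G} (hg : g ∈ μ.support) (hgν : ν.map (g • ·) ≠ ν) {K : Set G} (hK : IsCompact K) :
    Summable fun n => (walkLaw μ n).real K := by
  refine summable_walkLaw_of_isCompact (fun s => ?_) hK
  obtain ⟨f, hf⟩ := exists_poissonTransform_mul_ne hgν s
  exact ⟨poissonTransform ν f, isHarmonicFor_poissonTransform hν f,
    (isHarmonicFor_poissonTransform hν f).variance_pos hg hf⟩

end Group

section Crossing

variable {M X : Type*} [Monoid M] [MeasurableSpace M] [MulAction M X]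

/-- The contribution at `x` of the walks whose step `n + 1` leads from `B` into `C`, weighted by
`f (g₁ ⋯ gₙ₊₁ x)`. -/
def crossingTerm (μ : Measure M) (f : X → ℝ) (B C : Set M) (n : ℕ) (x : X) : ℝ :=
  ∫ g in {g : Fin (n + 1) → M |
      (List.ofFn (g ∘ Fin.castSucc)).prod ∈ B ∧ (List.ofFn g).prod ∈ C},
    f ((List.ofFn g).prod • x) ∂(Measure.pi fun _ => μ)

variable [MeasurableMul₂ M] [TopologicalSpace X] (μ : Measure M) [IsProbabilityMeasure μ]

theorem norm_crossingTerm_le_left (f : X →ᵇ ℝ) {B : Set M} (hB : MeasurableSet B) (C : Set M)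
    (n : ℕ) (x : X) : ‖crossingTerm μ f B C n x‖ ≤ ‖f‖ * (walkLaw μ n).real B := by
  have init_law := measurePreserving_fst.comp (measurePreserving_prod_init_last μ n)
  calc
    _ ≤ ‖f‖ * (Measure.pi fun _ => μ).real _ :=
      norm_setIntegral_le_of_norm_le_const (measure_lt_top _ _) fun g _ => f.norm_coe_le_norm _
    _ ≤ ‖f‖ * (walkLaw μ n).real B := by
      rw [← init_law.measureReal_preimage hB.nullMeasurableSet]
      exact mul_le_mul_of_nonneg_left (measureReal_mono fun g hg => hg.1) (norm_nonneg f)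

theorem norm_crossingTerm_le_right (f : X →ᵇ ℝ) (B : Set M) {C : Set M} (hC : MeasurableSet C)
    (n : ℕ) (x : X) : ‖crossingTerm μ f B C n x‖ ≤ ‖f‖ * (walkLaw μ (n + 1)).real C := by
  calc
    _ ≤ ‖f‖ * (Measure.pi fun _ => μ).real _ :=
      norm_setIntegral_le_of_norm_le_const (measure_lt_top _ _) fun g _ => f.norm_coe_le_norm _
    _ ≤ ‖f‖ * (walkLaw μ (n + 1)).real C := by
      rw [walkLaw, map_measureReal_apply (measurable_prod_ofFn _) hC]
      exact mul_le_mul_of_nonneg_left (measureReal_mono fun g hg => hg.2) (norm_nonneg f)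

variable {μ}

theorem summable_crossingTerm_left (f : X →ᵇ ℝ) {B : Set M} (hB : MeasurableSet B)
    (hsum : Summable fun n => (walkLaw μ n).real B) (C : Set M) (x : X) :
    Summable fun n => crossingTerm μ f B C n x :=
  .of_norm_bounded (hsum.mul_left ‖f‖) fun n => norm_crossingTerm_le_left μ f hB C n x

theorem summable_crossingTerm_right (f : X →ᵇ ℝ) (B : Set M) {C : Set M} (hC : MeasurableSet C)
    (hsum : Summable fun n => (walkLaw μ n).real C) (x : X) :
    Summable fun n => crossingTerm μ f B C n x :=
  .of_norm_bounded (((summable_nat_add_iff 1).2 hsum).mul_left ‖f‖)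
    fun n => norm_crossingTerm_le_right μ f B hC n x

variable [TopologicalSpace M] [SecondCountableTopology M] [BorelSpace M] [ContinuousSMul M X]
  [MeasurableSpace X] [BorelSpace X] (ν : Measure X) [IsProbabilityMeasure ν]

theorem integrable_smul_prod_ofFn (f : X →ᵇ ℝ) {n : ℕ} (m : Measure (Fin n → M))
    [IsFiniteMeasure m] :
    Integrable (fun p : X × (Fin n → M) => f ((List.ofFn p.2).prod • p.1)) (ν.prod m) := by
  have action_measurable : Measurable fun p : X × (Fin n → M) => (List.ofFn p.2).prod • p.1 :=
    ((measurable_prod_ofFn n).comp measurable_snd).smul measurable_fst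
  exact .of_bound (f.continuous.measurable.comp action_measurable).aestronglyMeasurable ‖f‖
    (.of_forall fun p => f.norm_coe_le_norm _)

theorem integrable_crossingTerm (f : X →ᵇ ℝ) (B C : Set M) (n : ℕ) :
    Integrable (crossingTerm μ f B C n) ν :=
  (integrable_smul_prod_ofFn ν f _).integral_prod_left

theorem integral_crossingTerm (f : X →ᵇ ℝ) (B C : Set M) (n : ℕ) :
    ∫ x, crossingTerm μ f B C n x ∂ν =
      ∫ g in {g : Fin (n + 1) → M |
          (List.ofFn (g ∘ Fin.castSucc)).prod ∈ B ∧ (List.ofFn g).prod ∈ C},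
        poissonTransform ν f (List.ofFn g).prod ∂(Measure.pi fun _ => μ) :=
  integral_integral_swap (integrable_smul_prod_ofFn ν f _)

theorem integrable_exit_sub_return (f : X →ᵇ ℝ) (A : Set M) (n : ℕ) :
    Integrable (fun x => crossingTerm μ f A Aᶜ n x - crossingTerm μ f Aᶜ A n x) ν :=
  (integrable_crossingTerm ν f A Aᶜ n).sub (integrable_crossingTerm ν f Aᶜ A n)

variable {ν}

theorem integral_exit_sub_return (hν : μ.bind (fun g => ν.map (g • ·)) = ν) (f : X →ᵇ ℝ)
    {A : Set M} (hA : MeasurableSet A) (n : ℕ) :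
    ∫ x, (crossingTerm μ f A Aᶜ n x - crossingTerm μ f Aᶜ A n x) ∂ν =
      ∫ s in A, poissonTransform ν f s ∂(walkLaw μ n) -
        ∫ s in A, poissonTransform ν f s ∂(walkLaw μ (n + 1)) := by
  rw [← (isHarmonicFor_poissonTransform hν f).setIntegral_exit_sub_return
      (fun n => (poissonTransform ν f).integrable _) hA n,
    ← integral_crossingTerm, ← integral_crossingTerm]
  exact integral_sub (integrable_crossingTerm ν f _ _ n) (integrable_crossingTerm ν f _ _ n)

theorem summable_integral_norm_exit_sub_return (f : X →ᵇ ℝ) {A : Set M} (hA : MeasurableSet A)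
    (hsum : Summable fun n => (walkLaw μ n).real A) :
    Summable fun n => ∫ x, ‖crossingTerm μ f A Aᶜ n x - crossingTerm μ f Aᶜ A n x‖ ∂ν := by
  refine .of_nonneg_of_le (fun n => integral_nonneg fun x => norm_nonneg _) (fun n => ?_)
    ((hsum.mul_left ‖f‖).add (((summable_nat_add_iff 1).2 hsum).mul_left ‖f‖))
  have bound (x : X) : ‖crossingTerm μ f A Aᶜ n x - crossingTerm μ f Aᶜ A n x‖ ≤
      ‖f‖ * (walkLaw μ n).real A + ‖f‖ * (walkLaw μ (n + 1)).real A :=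
    (norm_sub_le _ _).trans <| add_le_add (norm_crossingTerm_le_left μ f hA _ n x)
      (norm_crossingTerm_le_right μ f _ hA n x)
  simpa only [integral_const, probReal_univ, one_smul] using
    integral_mono (integrable_exit_sub_return ν f A n).norm (integrable_const _) bound

/-- Each step, the `ν`-average of exits minus returns is the loss of `ν`-mass carried by the walk
inside `A`; all of it is lost in the end since the walk is transient. -/
theorem integral_eq_integral_tsum_exit_sub_tsum_return
    (hν : μ.bind (fun g => ν.map (g • ·)) = ν) (f : X →ᵇ ℝ) {A : Set M} (hA : MeasurableSet A)
    (one_mem : 1 ∈ A) (hsum : Summable fun n => (walkLaw μ n).real A) :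
    ∫ x, f x ∂ν =
      ∫ x, (∑' n, crossingTerm μ f A Aᶜ n x - ∑' n, crossingTerm μ f Aᶜ A n x) ∂ν := by
  classical
  set mass := fun n => ∫ s in A, poissonTransform ν f s ∂(walkLaw μ n) with mass_def
  have summable_mass : Summable mass := .of_norm_bounded (hsum.mul_left ‖poissonTransform ν f‖)
    fun n => norm_setIntegral_le_of_norm_le_const (measure_lt_top _ _)
      fun s _ => (poissonTransform ν f).norm_coe_le_norm s
  calc
    ∫ x, f x ∂ν = mass 0 := by
      simp only [mass_def, walkLaw_zero]
      rw [setIntegral_dirac' (poissonTransform ν f).continuous.stronglyMeasurable _ hA,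
        if_pos one_mem, poissonTransform_apply]
      simp only [one_smul]
    _ = ∑' n, (mass n - mass (n + 1)) := by
      rw [summable_mass.tsum_sub ((summable_nat_add_iff 1).2 summable_mass),
        summable_mass.tsum_eq_zero_add, add_sub_cancel_right]
    _ = ∑' n, ∫ x, (crossingTerm μ f A Aᶜ n x - crossingTerm μ f Aᶜ A n x) ∂ν := by
      simp only [integral_exit_sub_return hν f hA, mass_def]
    _ = ∫ x, ∑' n, (crossingTerm μ f A Aᶜ n x - crossingTerm μ f Aᶜ A n x) ∂ν :=
      integral_tsum_of_summable_integral_norm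
        (integrable_exit_sub_return ν f A) (summable_integral_norm_exit_sub_return f hA hsum)
    _ = _ := integral_congr_ae <| .of_forall fun x =>
      (summable_crossingTerm_left f hA hsum _ x).tsum_sub
        (summable_crossingTerm_right f _ hA hsum x)

end Crossing

/-! ### Measures preserved by a group action -/

theorem isSolvable_of_commutator_le {G : Type*} [Group G] {H K : Subgroup G}
    [Group.IsSolvable K] (hHK : ⁅H, H⁆ ≤ K) : Group.IsSolvable H := by
  have map_commutator : (commutator H).map H.subtype ≤ K := by
    rwa [commutator_def, Subgroup.map_commutator, ← MonoidHom.range_eq_map, H.range_subtype]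
  have : Group.IsSolvable (commutator H) := by
    refine Group.isSolvable_of_isSolvable_injective
      (f := (H.subtype.comp (commutator H).subtype).codRestrict K
        fun g => map_commutator ⟨g, g.2, rfl⟩) ?_
    exact fun a b h => Subtype.ext (Subtype.ext (congrArg (fun k : K => (k : G)) h))
  exact Group.isSolvable_of_ker_le_range (commutator H).subtype Abelianization.of (by
    rw [Abelianization.ker_of, Subgroup.range_subtype])

theorem commutator_le_stabilizer {G X : Type*} [Group G] [MulAction G X] {H : Subgroup G} {x : X}
    (hx : ∀ g ∈ H, ∀ h ∈ H, g • h • x = h • g • x) : ⁅H, H⁆ ≤ MulAction.stabilizer G x := by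
  rw [Subgroup.commutator_le]
  intro g hg h hh
  rw [MulAction.mem_stabilizer_iff, commutatorElement_def, mul_smul, mul_smul, mul_smul,
    hx _ (inv_mem hg) _ (inv_mem hh), smul_inv_smul, smul_inv_smul]

section MeasureStabilizer

/-- The subgroup of the elements of `G` that preserve the measure `ν`. For a probability measure
on the projective line it is solvable, whence Zariski density yields an element moving `ν`. -/
def measureStabilizer (G : Type*) {X : Type*} [Group G] [MulAction G X] [MeasurableSpace X]
    [MeasurableConstSMul G X] (ν : Measure X) : Subgroup G where
  carrier := {g | ν.map (g • ·) = ν}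
  one_mem' := by simp only [Set.mem_ofPred_eq, one_smul, Measure.map_id']
  mul_mem' {g h} hg hh := by
    calc ν.map ((g * h) • ·) = (ν.map (h • ·)).map (g • ·) := by
          rw [Measure.map_map (measurable_const_smul g) (measurable_const_smul h)]
          simp only [Function.comp_def, mul_smul]
      _ = ν := by rw [hh, hg]
  inv_mem' {g} hg := by
    calc ν.map (g⁻¹ • ·) = (ν.map (g • ·)).map (g⁻¹ • ·) := by rw [hg]
      _ = ν := by
        rw [Measure.map_map (measurable_const_smul g⁻¹) (measurable_const_smul g)]
        simp only [Function.comp_def, inv_smul_smul, Measure.map_id']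

variable {G X : Type*} [Group G] [MulAction G X] [MeasurableSpace X] [MeasurableConstSMul G X]
  {ν : Measure X}

theorem mem_measureStabilizer {g : G} : g ∈ measureStabilizer G ν ↔ ν.map (g • ·) = ν := Iff.rfl

theorem measure_singleton_smul [MeasurableSingletonClass X] {g : G}
    (hg : g ∈ measureStabilizer G ν) (x : X) : ν {g • x} = ν {x} := by
  conv_lhs => rw [← mem_measureStabilizer.1 hg]
  rw [Measure.map_apply (measurable_const_smul g) (measurableSet_singleton _)]
  congr 1
  ext y
  exact smul_left_cancel_iff g

theorem eq_or_eq_or_eq_of_half_le_measure_singleton [IsProbabilityMeasure ν]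
    [MeasurableSingletonClass X] {x y z : X} (hx : 2⁻¹ ≤ ν {x}) (hy : 2⁻¹ ≤ ν {y})
    (hz : 2⁻¹ ≤ ν {z}) : x = y ∨ x = z ∨ y = z := by
  by_contra! distinct
  obtain ⟨hxy, hxz, hyz⟩ := distinct
  classical
  have sum_le : ∑ a ∈ ({x, y, z} : Finset X), ν {a} ≤ 1 := by
    rw [sum_measure_singleton]
    exact prob_le_one
  rw [Finset.sum_insert (by simp [hxy, hxz]), Finset.sum_pair hyz] at sum_le
  have : 1 + 2⁻¹ ≤ (1 : ENNReal) := by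
    calc (1 : ENNReal) + 2⁻¹ = 2⁻¹ + (2⁻¹ + 2⁻¹) := by rw [ENNReal.inv_two_add_inv_two, add_comm]
      _ ≤ 1 := (add_le_add hx (add_le_add hy hz)).trans sum_le
  exact absurd this (not_le.2 (ENNReal.lt_add_right ENNReal.one_ne_top (by simp)))

/-- At most two points have mass at least `1 / 2`, and the stabilizer of `ν` permutes them. -/
theorem commutator_measureStabilizer_le_stabilizer [IsProbabilityMeasure ν]
    [MeasurableSingletonClass X] {p : X} (hp : 2⁻¹ ≤ ν {p}) :
    ⁅measureStabilizer G ν, measureStabilizer G ν⁆ ≤ MulAction.stabilizer G p := by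
  have heavy_smul {k : G} (hk : k ∈ measureStabilizer G ν) {x : X} (hx : 2⁻¹ ≤ ν {x}) :
      2⁻¹ ≤ ν {k • x} := by rwa [measure_singleton_smul hk]
  have fixes_smul {k l : G} (hk : k ∈ measureStabilizer G ν) (hl : l ∈ measureStabilizer G ν)
      (hkp : k • p = p) : k • l • p = l • p := by
    rcases eq_or_eq_or_eq_of_half_le_measure_singleton hp (heavy_smul hl hp)
      (heavy_smul hk (heavy_smul hl hp)) with h | h | h
    · rw [← h, hkp]
    · rw [← smul_left_cancel k (hkp.trans h), hkp]
    · exact h.symm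
  refine commutator_le_stabilizer fun g hg h hh => ?_
  rcases eq_or_eq_or_eq_of_half_le_measure_singleton hp (heavy_smul hg hp) (heavy_smul hh hp)
    with hgp | hhp | hghp
  · rw [fixes_smul hg hh hgp.symm, ← hgp]
  · rw [fixes_smul hh hg hhp.symm, ← hhp]
  · have := fixes_smul (mul_mem (inv_mem hh) hg) hh (by rw [mul_smul, hghp, inv_smul_smul])
    rw [mul_smul, inv_smul_eq_iff] at this
    rw [this, hghp]

theorem one_le_measure_singleton_add_of_tendsto [TopologicalSpace X] [OpensMeasurableSpace X]
    [MeasurableSingletonClass X] [IsProbabilityMeasure ν] [ν.OuterRegular] {T : ℕ → X → X}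
    (hT : ∀ n, MeasurePreserving (T n) ν ν) {p w : X}
    (hTp : ∀ x, x ≠ w → Tendsto (fun n => T n x) atTop (𝓝 p)) : 1 ≤ ν {p} + ν {w} := by
  have compl_le_of_isOpen {U : Set X} (hU : IsOpen U) (hpU : p ∈ U) : ν {w}ᶜ ≤ ν U := by
    have monotone_iInter : Monotone fun n => ⋂ k ≥ n, T k ⁻¹' U := fun m n hmn =>
      Set.biInter_mono (fun k hk => hmn.trans hk) fun _ _ => subset_rfl
    calc ν {w}ᶜ ≤ ν (⋃ n, ⋂ k ≥ n, T k ⁻¹' U) := measure_mono fun x hx => by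
          simpa only [Set.mem_iUnion, Set.mem_iInter, Set.mem_preimage] using
            eventually_atTop.1 ((hTp x hx).eventually_mem (hU.mem_nhds hpU))
      _ = ⨆ n, ν (⋂ k ≥ n, T k ⁻¹' U) := monotone_iInter.measure_iUnion
      _ ≤ ν U := iSup_le fun n => (measure_mono (Set.biInter_subset_of_mem le_rfl)).trans
        ((hT n).measure_preimage hU.nullMeasurableSet).le
  have compl_le : ν {w}ᶜ ≤ ν {p} := by
    rw [Set.measure_eq_iInf_isOpen {p}]
    exact le_iInf₂ fun U hpU => le_iInf fun hU => compl_le_of_isOpen hU (hpU rfl)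
  calc 1 = ν {w}ᶜ + ν {w} := by
        rw [add_comm, measure_add_measure_compl (measurableSet_singleton w), measure_univ]
    _ ≤ ν {p} + ν {w} := by gcongr

end MeasureStabilizer

/-! ### The projective line -/

theorem projectivization_mk_eq_mk_iff_det {K : Type*} [Field K] {v w : Fin 2 → K} (hv : v ≠ 0)
    (hw : w ≠ 0) :
    Projectivization.mk K v hv = Projectivization.mk K w hw ↔ v 0 * w 1 = v 1 * w 0 := by
  rw [Projectivization.mk_eq_mk_iff']
  constructor
  · rintro ⟨a, rfl⟩
    simp only [Pi.smul_apply, smul_eq_mul]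
    ring
  · intro h
    obtain ⟨i, hi⟩ := Function.ne_iff.1 hw
    refine ⟨v i / w i, funext fun j => ?_⟩
    rw [Pi.smul_apply, smul_eq_mul, div_mul_eq_mul_div, div_eq_iff hi]
    fin_cases i <;> fin_cases j <;> grind


theorem exists_projectivization_mk_mulVec_eq {K : Type*} [Field K] {A : Matrix (Fin 2) (Fin 2) K}
    (hA : A ≠ 0) (det_A : A.det = 0) :
    ∃ p w : Projectivization K (Fin 2 → K), ∀ v (hv : v ≠ 0), Projectivization.mk K v hv ≠ w →
      ∃ hAv : A.mulVec v ≠ 0, Projectivization.mk K (A.mulVec v) hAv = p := by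
  obtain ⟨w, hw, hAw⟩ := Matrix.exists_mulVec_eq_zero_iff.2 det_A
  obtain ⟨e, he⟩ : ∃ e, A.mulVec e ≠ 0 := by
    contrapose! hA
    exact Matrix.ext_of_mulVec_single fun i => by rw [hA, Matrix.zero_mulVec]
  refine ⟨Projectivization.mk K _ he, Projectivization.mk K w hw, fun v hv hvw => ?_⟩
  rw [Ne, projectivization_mk_eq_mk_iff_det, ← sub_eq_zero] at hvw
  have cramer : (v 0 * w 1 - v 1 * w 0) • e =
      (e 0 * w 1 - e 1 * w 0) • v + (v 0 * e 1 - v 1 * e 0) • w := by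
    ext i
    simp only [Pi.add_apply, Pi.smul_apply, smul_eq_mul]
    fin_cases i <;> grind
  have parallel : (v 0 * w 1 - v 1 * w 0) • A.mulVec e =
      (e 0 * w 1 - e 1 * w 0) • A.mulVec v := by
    simpa only [Matrix.mulVec_add, Matrix.mulVec_smul, hAw, smul_zero, add_zero] using
      congrArg A.mulVec cramer
  have hAv : A.mulVec v ≠ 0 := by
    intro h
    rw [h, smul_zero] at parallel
    exact smul_ne_zero hvw he parallel
  refine ⟨hAv, ((Projectivization.mk_eq_mk_iff' K _ _ he hAv).2
    ⟨(v 0 * w 1 - v 1 * w 0)⁻¹ * (e 0 * w 1 - e 1 * w 0), ?_⟩).symm⟩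
  rw [mul_smul, ← parallel, inv_smul_smul₀ hvw]


theorem commute_of_commute_of_notMem_range_scalar {R : Type*} [CommRing R] [NoZeroDivisors R]
    {M A B : Matrix (Fin 2) (Fin 2) R} (hM : M ∉ Set.range (Matrix.scalar (Fin 2)))
    (hA : Commute A M) (hB : Commute B M) : Commute A B := by
  have commute_iff (P Q : Matrix (Fin 2) (Fin 2) R) : Commute P Q ↔
      P 0 1 * Q 1 0 = Q 0 1 * P 1 0 ∧ (P 0 0 - P 1 1) * Q 0 1 = (Q 0 0 - Q 1 1) * P 0 1 ∧
        (P 0 0 - P 1 1) * Q 1 0 = (Q 0 0 - Q 1 1) * P 1 0 := by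
    simp only [commute_iff_eq, ← Matrix.ext_iff, Fin.forall_fin_two, Matrix.mul_apply,
      Fin.sum_univ_two]
    grind
  rw [commute_iff] at hA hB ⊢
  have nonscalar : M 0 1 ≠ 0 ∨ M 1 0 ≠ 0 ∨ M 0 0 - M 1 1 ≠ 0 := by
    contrapose! hM
    refine ⟨M 0 0, ?_⟩
    ext i j
    fin_cases i <;> fin_cases j <;> simp [hM, sub_eq_zero.1 hM.2.2]
  rcases nonscalar with h | h | h <;>
    refine ⟨mul_left_cancel₀ h ?_, mul_left_cancel₀ h ?_, mul_left_cancel₀ h ?_⟩ <;> grind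

theorem commute_of_smul_eq_self {K : Type*} [Field K] {u : Fin 2 → K} (hu : u ≠ 0)
    {g h : Matrix.SpecialLinearGroup (Fin 2) K} (hg : g • u = u) (hh : h • u = u) :
    Commute g h := by
  -- the nilpotent matrix with kernel and image `K u`
  let N : Matrix (Fin 2) (Fin 2) K := Matrix.vecMulVec u ![-u 1, u 0]
  have commute_N {k : Matrix.SpecialLinearGroup (Fin 2) K} (hk : k • u = u) :
      Commute (k : Matrix (Fin 2) (Fin 2) K) N := by
    have det_k := k.det_coe
    have k_mulVec (i : Fin 2) : k.1 i 0 * u 0 + k.1 i 1 * u 1 = u i := by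
      have : (k : Matrix (Fin 2) (Fin 2) K).mulVec u = u := hk
      simpa only [Matrix.mulVec, dotProduct, Fin.sum_univ_two] using congrFun this i
    rw [Matrix.det_fin_two] at det_k
    rw [commute_iff_eq, ← Matrix.ext_iff]
    simp only [Fin.forall_fin_two, Matrix.mul_apply, Fin.sum_univ_two, N, Matrix.vecMulVec_apply,
      Matrix.cons_val_zero, Matrix.cons_val_one] at k_mulVec ⊢
    grind
  have N_notMem : N ∉ Set.range (Matrix.scalar (Fin 2)) := by
    rintro ⟨a, ha⟩
    have h01 := congrFun₂ ha 0 1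
    have h10 := congrFun₂ ha 1 0
    refine hu (funext fun i => ?_)
    fin_cases i <;> simp_all [N]
  exact Subtype.ext (commute_of_commute_of_notMem_range_scalar N_notMem (commute_N hg)
    (commute_N hh))

theorem isSolvable_stabilizer_projectivization {K : Type*} [Field K]
    (p : Projectivization K (Fin 2 → K)) :
    Group.IsSolvable (MulAction.stabilizer (Matrix.SpecialLinearGroup (Fin 2) K) p) := by
  induction p using Projectivization.ind with | h u hu =>
  set SL := Matrix.SpecialLinearGroup (Fin 2) K
  have : Group.IsSolvable (MulAction.stabilizer SL u) :=
    Group.isSolvable_of_comm fun g h => Subtype.ext (commute_of_smul_eq_self hu g.2 h.2)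
  refine isSolvable_of_commutator_le (K := MulAction.stabilizer SL u) ?_
  have exists_eigenvalue {g : SL}
      (hg : g ∈ MulAction.stabilizer SL (Projectivization.mk K u hu)) :
      ∃ a : Kˣ, g • u = a • u := by
    rw [MulAction.mem_stabilizer_iff, Projectivization.smul_mk, Projectivization.mk_eq_mk_iff] at hg
    exact hg.imp fun a ha => ha.symm
  refine commutator_le_stabilizer fun g hg h hh => ?_
  obtain ⟨a, ha⟩ := exists_eigenvalue hg
  obtain ⟨b, hb⟩ := exists_eigenvalue hh
  rw [ha, hb, smul_comm g b, smul_comm h a, ha, hb, smul_comm]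

theorem isQuotientMap_projectivization_mk' :
    IsQuotientMap (Projectivization.mk' ℝ : {v : Fin 2 → ℝ // v ≠ 0} → PX) :=
  isQuotientMap_quotient_mk'

theorem isOpenQuotientMap_projectivization_mk' :
    IsOpenQuotientMap (Projectivization.mk' ℝ : {v : Fin 2 → ℝ // v ≠ 0} → PX) := by
  refine ⟨isQuotientMap_projectivization_mk'.surjective,
    isQuotientMap_projectivization_mk'.continuous, fun U hU => ?_⟩
  have saturation : Projectivization.mk' ℝ ⁻¹' (Projectivization.mk' ℝ '' U) =
      ⋃ a : ℝˣ, (fun v : {v : Fin 2 → ℝ // v ≠ 0} =>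
        (⟨a • v.1, (smul_ne_zero_iff_ne a).2 v.2⟩ : {v : Fin 2 → ℝ // v ≠ 0})) ⁻¹' U := by
    ext v
    simp only [Set.mem_preimage, Set.mem_image, Set.mem_iUnion]
    constructor
    · rintro ⟨w, hw, hwv⟩
      obtain ⟨a, ha⟩ := (Projectivization.mk_eq_mk_iff ℝ w.1 v.1 w.2 v.2).1 hwv
      exact ⟨a, by simpa only [ha] using hw⟩
    · rintro ⟨a, ha⟩
      exact ⟨_, ha, (Projectivization.mk_eq_mk_iff ℝ _ v.1 _ v.2).2 ⟨a, rfl⟩⟩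
  rw [← isQuotientMap_projectivization_mk'.isOpen_preimage, saturation]
  exact isOpen_iUnion fun a => hU.preimage
    ((continuous_subtype_val.const_smul a).subtype_mk _)

instance : T2Space PX := by
  rw [t2Space_iff_of_isOpenQuotientMap isOpenQuotientMap_projectivization_mk']
  have : {q : {v : Fin 2 → ℝ // v ≠ 0} × {v : Fin 2 → ℝ // v ≠ 0} |
      (Projectivization.mk' ℝ q.1 : PX) = Projectivization.mk' ℝ q.2} =
      {q | q.1.1 0 * q.2.1 1 = q.1.1 1 * q.2.1 0} :=
    Set.ext fun q => projectivization_mk_eq_mk_iff_det q.1.2 q.2.2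
  rw [this]
  have coord (i : Fin 2) : Continuous fun v : {v : Fin 2 → ℝ // v ≠ 0} => v.1 i :=
    (continuous_apply i).comp continuous_subtype_val
  exact isClosed_eq (((coord 0).comp continuous_fst).mul ((coord 1).comp continuous_snd))
    (((coord 1).comp continuous_fst).mul ((coord 0).comp continuous_snd))

instance : SecondCountableTopology PX :=
  isOpenQuotientMap_projectivization_mk'.isQuotientMap.secondCountableTopology
    isOpenQuotientMap_projectivization_mk'.isOpenMap

instance : CompactSpace PX := by
  have ne_zero (v : Metric.sphere (0 : Fin 2 → ℝ) 1) : v.1 ≠ 0 := ne_zero_of_mem_unit_sphere v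
  have surjective : Function.Surjective
      fun v : Metric.sphere (0 : Fin 2 → ℝ) 1 => (Projectivization.mk ℝ v.1 (ne_zero v) : PX) := by
    intro x
    induction x using Projectivization.ind with | h v hv =>
    refine ⟨⟨‖v‖⁻¹ • v, by simp [norm_smul, hv]⟩, ?_⟩
    rw [projectivization_mk_eq_mk_iff_det]
    simp only [Pi.smul_apply, smul_eq_mul]
    ring
  exact surjective.compactSpace
    (isQuotientMap_projectivization_mk'.continuous.comp (continuous_subtype_val.subtype_mk ne_zero))

instance : TopologicalSpace.MetrizableSpace PX :=
  TopologicalSpace.metrizableSpace_of_t3_secondCountable PX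

instance : IsTopologicalGroup SL2 := Matrix.SpecialLinearGroup.topologicalGroup

instance : BorelSpace SL2 := ⟨rfl⟩

instance : BorelSpace PX := ⟨rfl⟩

instance : SecondCountableTopology SL2 :=
  have : SecondCountableTopology (Matrix (Fin 2) (Fin 2) ℝ) :=
    inferInstanceAs (SecondCountableTopology (Fin 2 → Fin 2 → ℝ))
  Matrix.SpecialLinearGroup.isClosedEmbedding_val.isEmbedding.secondCountableTopology

theorem act_eq_smul (g : SL2) (x : PX) : act g x = g • x := rfl

instance : ContinuousSMul SL2 PX := by
  refine ⟨?_⟩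
  rw [← (IsOpenQuotientMap.id.prodMap
    isOpenQuotientMap_projectivization_mk').continuous_comp_iff]
  have continuous_mulVec : Continuous fun q : SL2 × {v : Fin 2 → ℝ // v ≠ 0} =>
      (q.1 : Matrix (Fin 2) (Fin 2) ℝ).mulVec q.2.1 :=
    (Matrix.SpecialLinearGroup.isClosedEmbedding_val.continuous.comp continuous_fst).matrix_mulVec
      (continuous_subtype_val.comp continuous_snd)
  exact isQuotientMap_projectivization_mk'.continuous.comp
    (continuous_mulVec.subtype_mk fun q => (smul_ne_zero_iff_ne q.1).2 q.2.2)

/-! ### Stabilizers of measures on the projective line -/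

section CompactSubgroup

open scoped Matrix.Norms.L2Operator

/-- `rotationConj g` is `g J g⁻¹`, with `J` the quarter turn. Its Haar average over a compact
subgroup commutes with that subgroup. -/
def rotationConj (g : SL2) : Matrix (Fin 2) (Fin 2) ℝ :=
  (g : Matrix (Fin 2) (Fin 2) ℝ) * !![0, -1; 1, 0] * ((g⁻¹ : SL2) : Matrix (Fin 2) (Fin 2) ℝ)

theorem continuous_rotationConj : Continuous rotationConj :=
  (Matrix.SpecialLinearGroup.isClosedEmbedding_val.continuous.mul continuous_const).mul
    (Matrix.SpecialLinearGroup.isClosedEmbedding_val.continuous.comp (continuous_inv (G := SL2)))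

theorem rotationConj_mul_mul (g h : SL2) :
    rotationConj (g * h) * (g : Matrix (Fin 2) (Fin 2) ℝ) = g * rotationConj h := by
  have inv_mul : ((g⁻¹ : SL2) : Matrix (Fin 2) (Fin 2) ℝ) * g = 1 := by
    rw [← Matrix.SpecialLinearGroup.coe_mul, inv_mul_cancel, Matrix.SpecialLinearGroup.coe_one]
  simp only [rotationConj, mul_inv_rev, Matrix.SpecialLinearGroup.coe_mul, mul_assoc, inv_mul,
    mul_one]

theorem rotationConj_apply_one_zero (g : SL2) :
    rotationConj g 1 0 = g.1 1 0 ^ 2 + g.1 1 1 ^ 2 := by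
  simp only [rotationConj, Matrix.SpecialLinearGroup.coe_inv, Matrix.adjugate_fin_two,
    Matrix.mul_apply, Fin.sum_univ_two, Matrix.of_apply, Matrix.cons_val_zero, Matrix.cons_val_one]
  ring

theorem rotationConj_apply_one_zero_pos (g : SL2) : 0 < rotationConj g 1 0 := by
  rw [rotationConj_apply_one_zero]
  obtain ⟨j, hj⟩ := Function.ne_iff.1 (g.row_ne_zero (i := 1))
  rw [Pi.zero_apply] at hj
  fin_cases j
  · exact add_pos_of_pos_of_nonneg (sq_pos_of_ne_zero hj) (sq_nonneg _)
  · exact add_pos_of_nonneg_of_pos (sq_nonneg _) (sq_pos_of_ne_zero hj)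

theorem exists_forall_commute_of_isCompact {H : Subgroup SL2} (hH : IsCompact (H : Set SL2)) :
    ∃ M ∉ Set.range (Matrix.scalar (Fin 2)),
      ∀ g ∈ H, Commute (g : Matrix (Fin 2) (Fin 2) ℝ) M := by
  have : CompactSpace H := isCompact_iff_compactSpace.1 hH
  let haar : Measure H := Measure.haar
  have continuous_conj : Continuous fun h : H => rotationConj h :=
    continuous_rotationConj.comp continuous_subtype_val
  have integrable_conj : Integrable (fun h : H => rotationConj h) haar :=
    continuous_conj.integrable_of_hasCompactSupport (.of_compactSpace _)
  refine ⟨∫ h : H, rotationConj h ∂haar, ?_, fun g hg => ?_⟩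
  · rintro ⟨a, ha⟩
    let entry : Matrix (Fin 2) (Fin 2) ℝ →L[ℝ] ℝ :=
      (Matrix.entryLinearMap ℝ ℝ 1 0).toContinuousLinearMap
    have entry_pos : 0 < entry (∫ h : H, rotationConj h ∂haar) := by
      rw [← entry.integral_comp_comm integrable_conj]
      exact (entry.continuous.comp continuous_conj).integral_pos_of_hasCompactSupport_nonneg_nonzero
        (.of_compactSpace _) (fun h => (rotationConj_apply_one_zero_pos h).le)
        (rotationConj_apply_one_zero_pos (1 : H)).ne'
    rw [← ha] at entry_pos
    simp [entry] at entry_pos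
  · calc (g : Matrix (Fin 2) (Fin 2) ℝ) * ∫ h : H, rotationConj h ∂haar
      _ = ∫ h : H, (g : Matrix (Fin 2) (Fin 2) ℝ) * rotationConj h ∂haar :=
          ((ContinuousLinearMap.mul ℝ _ g.1).integral_comp_comm integrable_conj).symm
      _ = ∫ h : H, rotationConj ((⟨g, hg⟩ * h : H) : SL2) * g.1 ∂haar := by
          simp only [Subgroup.coe_mul, rotationConj_mul_mul]
      _ = ∫ h : H, rotationConj h * g.1 ∂haar :=
          integral_mul_left_eq_self (fun h : H => rotationConj h * g.1) ⟨g, hg⟩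
      _ = (∫ h : H, rotationConj h ∂haar) * g.1 :=
          ((ContinuousLinearMap.mul ℝ _).flip g.1).integral_comp_comm integrable_conj

theorem isSolvable_of_isCompact {H : Subgroup SL2} (hH : IsCompact (H : Set SL2)) :
    Group.IsSolvable H := by
  obtain ⟨M, M_notMem, commute_M⟩ := exists_forall_commute_of_isCompact hH
  exact Group.isSolvable_of_comm fun g h => Subtype.ext <| Subtype.ext <|
    commute_of_commute_of_notMem_range_scalar M_notMem (commute_M g g.2) (commute_M h h.2)

end CompactSubgroup

section OperatorNorm

open scoped Matrix.Norms.L2Operator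

theorem opNorm_eq_norm (g : SL2) : opNorm g = ‖(g : Matrix (Fin 2) (Fin 2) ℝ)‖ := rfl

theorem continuous_opNorm : Continuous opNorm :=
  (continuous_norm (E := Matrix (Fin 2) (Fin 2) ℝ)).comp
    Matrix.SpecialLinearGroup.isClosedEmbedding_val.continuous

theorem opNorm_pos (g : SL2) : 0 < opNorm g := by
  rw [opNorm_eq_norm, norm_pos_iff]
  intro h
  simpa [h] using g.det_coe

theorem continuous_kappa : Continuous kappa :=
  continuous_opNorm.log fun g => (opNorm_pos g).ne'

theorem kappa_one : kappa 1 = 0 := by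
  simp [kappa, opNorm_eq_norm]

theorem isCompact_setOf_opNorm_le (C : ℝ) : IsCompact {g : SL2 | opNorm g ≤ C} := by
  have : ProperSpace (Matrix (Fin 2) (Fin 2) ℝ) := FiniteDimensional.proper ℝ _
  simp only [opNorm_eq_norm, ← mem_closedBall_zero_iff]
  exact Matrix.SpecialLinearGroup.isClosedEmbedding_val.isCompact_preimage
    (isCompact_closedBall _ _)

theorem isCompact_setOf_kappa_le (t : ℝ) : IsCompact {g : SL2 | kappa g ≤ t} := by
  simpa only [kappa, Real.log_le_iff_le_exp (opNorm_pos _)] using isCompact_setOf_opNorm_le t.exp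

theorem tendsto_smul_projectivization_mk {ι : Type*} {l : Filter ι} {g : ι → SL2} {c : ι → ℝ}
    (hc : ∀ i, c i ≠ 0) {A : Matrix (Fin 2) (Fin 2) ℝ}
    (hA : Tendsto (fun i => c i • (g i : Matrix (Fin 2) (Fin 2) ℝ)) l (𝓝 A)) {v : Fin 2 → ℝ}
    (hv : v ≠ 0) (hAv : A.mulVec v ≠ 0) :
    Tendsto (fun i => g i • Projectivization.mk ℝ v hv) l
      (𝓝 (Projectivization.mk ℝ (A.mulVec v) hAv)) := by
  have ne_zero (i : ι) : (c i • (g i : Matrix (Fin 2) (Fin 2) ℝ)).mulVec v ≠ 0 := by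
    rw [Matrix.smul_mulVec]
    exact smul_ne_zero (hc i) ((smul_ne_zero_iff_ne (g i)).2 hv)
  have smul_eq (i : ι) : g i • Projectivization.mk ℝ v hv =
      Projectivization.mk ℝ _ (ne_zero i) := by
    refine (Projectivization.mk_eq_mk_iff' ℝ _ _ _ _).2 ⟨(c i)⁻¹, ?_⟩
    rw [Matrix.smul_mulVec, inv_smul_smul₀ (hc i)]
    rfl
  simp only [smul_eq]
  have tendsto_mulVec : Tendsto
      (fun i => (c i • (g i : Matrix (Fin 2) (Fin 2) ℝ)).mulVec v) l (𝓝 (A.mulVec v)) :=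
    ((continuous_id.matrix_mulVec continuous_const).tendsto A).comp hA
  exact (isQuotientMap_projectivization_mk'.continuous.tendsto ⟨_, hAv⟩).comp
    (tendsto_subtype_rng.2 tendsto_mulVec : Tendsto
      (fun i => (⟨_, ne_zero i⟩ : {v : Fin 2 → ℝ // v ≠ 0})) l (𝓝 ⟨_, hAv⟩))

/-- A limit of the normalised matrices `g / ‖g‖` has rank one. -/
theorem exists_tendsto_smul_of_not_isCompact {S : Set SL2} (hS : IsClosed S)
    (hS_compact : ¬ IsCompact S) :
    ∃ g : ℕ → SL2, (∀ n, g n ∈ S) ∧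
      ∃ p w : PX, ∀ x, x ≠ w → Tendsto (fun n => g n • x) atTop (𝓝 p) := by
  have unbounded (n : ℕ) : ∃ g ∈ S, n < opNorm g := by
    contrapose! hS_compact
    exact (isCompact_setOf_opNorm_le n).of_isClosed_subset hS hS_compact
  choose g g_mem g_norm using unbounded
  have : ProperSpace (Matrix (Fin 2) (Fin 2) ℝ) := FiniteDimensional.proper ℝ _
  have normalized_mem (n : ℕ) : (opNorm (g n))⁻¹ • (g n : Matrix (Fin 2) (Fin 2) ℝ) ∈
      Metric.sphere 0 1 := by
    rw [mem_sphere_zero_iff_norm, norm_smul, norm_inv, Real.norm_of_nonneg (opNorm_pos _).le,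
      ← opNorm_eq_norm, inv_mul_cancel₀ (opNorm_pos _).ne']
  obtain ⟨A, hA, φ, hφ, tendsto_A⟩ := (isCompact_sphere _ _).tendsto_subseq normalized_mem
  have tendsto_inv_opNorm : Tendsto (fun n => (opNorm (g (φ n)))⁻¹) atTop (𝓝 0) :=
    (tendsto_inv_atTop_zero.comp (tendsto_atTop_mono (fun n => (g_norm n).le)
      tendsto_natCast_atTop_atTop)).comp hφ.tendsto_atTop
  have det_A : A.det = 0 := by
    refine tendsto_nhds_unique ((continuous_id.matrix_det.tendsto A).comp tendsto_A) ?_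
    have := tendsto_inv_opNorm.pow 2
    simpa [Function.comp_def, Matrix.det_smul] using this
  obtain ⟨p, w, hpw⟩ := exists_projectivization_mk_mulVec_eq
    (ne_zero_of_mem_unit_sphere ⟨A, hA⟩) det_A
  refine ⟨g ∘ φ, fun n => g_mem _, p, w, fun x hx => ?_⟩
  induction x using Projectivization.ind with | h v hv =>
  obtain ⟨hAv, rfl⟩ := hpw v hv hx
  exact tendsto_smul_projectivization_mk (fun n => inv_ne_zero (opNorm_pos _).ne') tendsto_A hv hAv

end OperatorNorm

theorem isSolvable_measureStabilizer (ν : Measure PX) [IsProbabilityMeasure ν] :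
    Group.IsSolvable (measureStabilizer SL2 ν) := by
  by_cases compact : IsCompact (measureStabilizer SL2 ν : Set SL2)
  · exact isSolvable_of_isCompact compact
  obtain ⟨g, g_mem, p, w, tendsto_p⟩ :=
    exists_tendsto_smul_of_not_isCompact isClosed_setOf_map_smul_eq compact
  have one_le : 1 ≤ ν {p} + ν {w} := one_le_measure_singleton_add_of_tendsto
    (fun n => ⟨measurable_const_smul (g n), g_mem n⟩) tendsto_p
  obtain ⟨q, hq⟩ : ∃ q, 2⁻¹ ≤ ν {q} := by
    contrapose! one_le
    rw [← ENNReal.inv_two_add_inv_two]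
    exact ENNReal.add_lt_add (one_le p) (one_le w)
  have := isSolvable_stabilizer_projectivization q
  exact isSolvable_of_commutator_le (commutator_measureStabilizer_le_stabilizer hq)

theorem measSupp_eq_support (μ : Measure SL2) : measSupp μ = μ.support := by
  ext g
  rw [Measure.mem_support_iff_forall]
  refine ⟨fun hg U hU => ?_, fun hg U hU hgU => hg U (hU.mem_nhds hgU)⟩
  obtain ⟨V, hVU, hV, hgV⟩ := mem_nhds_iff.1 hU
  exact (hg V hV hgV).trans_le (measure_mono hVU)

theorem ZariskiDense.exists_map_smul_ne {μ : Measure SL2} (hμ : ZariskiDense μ) (ν : Measure PX)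
    [IsProbabilityMeasure ν] : ∃ g ∈ μ.support, ν.map (g • ·) ≠ ν := by
  by_contra! preserves
  have closure_le : Subgroup.closure (measSupp μ) ≤ measureStabilizer SL2 ν := by
    rw [Subgroup.closure_le, measSupp_eq_support]
    exact preserves
  have := isSolvable_measureStabilizer ν
  exact hμ (Group.isSolvable_of_isSolvable_injective (Subgroup.inclusion_injective closure_le))

theorem summable_walkLaw_setOf_kappa_lt {μ : Measure SL2} [IsProbabilityMeasure μ]
    (hμ : ZariskiDense μ) {ν : Measure PX} [IsProbabilityMeasure ν] (hν : IsMuStationary μ ν)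
    (t : ℝ) : Summable fun n => (walkLaw μ n).real {g | kappa g < t} := by
  obtain ⟨g, hg, hgν⟩ := hμ.exists_map_smul_ne ν
  refine .of_nonneg_of_le (fun _ => measureReal_nonneg) (fun _ => measureReal_mono ?_)
    (summable_walkLaw_of_map_smul_ne hν hg hgν (isCompact_setOf_kappa_le t))
  exact Set.ofPred_subset_ofPred.2 fun _ h => h.le

theorem stopping_time_identity_general
    (μ : Measure SL2) [IsProbabilityMeasure μ]
    (hzd : ZariskiDense μ)
    (ν : Measure PX) [IsProbabilityMeasure ν] (hstat : IsMuStationary μ ν)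
    (t : ℝ) (ht : 0 < t) (f : PX → ℝ) (hf : Continuous f) :
    (∀ x : PX, Summable (fun n : ℕ =>
      ∫ g in {g : Fin (n + 1) → SL2 |
          kappa (word (g ∘ Fin.castSucc)) < t ∧ t ≤ kappa (word g)},
        f (act (word g) x) ∂(μpi μ (n + 1)))) ∧
    (∀ x : PX, Summable (fun n : ℕ =>
      ∫ g in {g : Fin (n + 1) → SL2 |
          t ≤ kappa (word (g ∘ Fin.castSucc)) ∧ kappa (word g) < t},
        f (act (word g) x) ∂(μpi μ (n + 1)))) ∧
    ∫ x, f x ∂ν =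
      ∫ x,
        ((∑' n : ℕ, ∫ g in {g : Fin (n + 1) → SL2 |
            kappa (word (g ∘ Fin.castSucc)) < t ∧ t ≤ kappa (word g)},
          f (act (word g) x) ∂(μpi μ (n + 1))) -
         (∑' n : ℕ, ∫ g in {g : Fin (n + 1) → SL2 |
            t ≤ kappa (word (g ∘ Fin.castSucc)) ∧ kappa (word g) < t},
          f (act (word g) x) ∂(μpi μ (n + 1)))) ∂ν := by
  have measurable_sublevel : MeasurableSet {g : SL2 | kappa g < t} :=
    measurableSet_lt continuous_kappa.measurable measurable_const
  have summable_sublevel := summable_walkLaw_setOf_kappa_lt hzd hstat t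
  have one_mem : 1 ∈ {g : SL2 | kappa g < t} := by rwa [Set.mem_ofPred_eq, kappa_one]
  let F : PX →ᵇ ℝ := .mkOfCompact ⟨f, hf⟩
  have exits := summable_crossingTerm_left F measurable_sublevel summable_sublevel
    {g | kappa g < t}ᶜ
  have returns := summable_crossingTerm_right F {g | kappa g < t}ᶜ measurable_sublevel
    summable_sublevel
  have identity := integral_eq_integral_tsum_exit_sub_tsum_return hstat F measurable_sublevel
    one_mem summable_sublevel
  simp only [crossingTerm, Set.mem_compl_iff, Set.mem_ofPred_eq, not_lt] at exits returns identity
  simp only [μpi, word, act_eq_smul]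
  exact ⟨exits, returns, identity⟩

theorem stopping_time_identity
    (μ : Measure SL2) [IsProbabilityMeasure μ]
    (hmom : HasExpMoment μ) (hzd : ZariskiDense μ)
    (ν : Measure PX) [IsProbabilityMeasure ν] (hstat : IsMuStationary μ ν)
    (t : ℝ) (ht : 0 < t) (f : PX → ℝ) (hf : Continuous f) :
    (∀ x : PX, Summable (fun n : ℕ =>
      ∫ g in {g : Fin (n + 1) → SL2 |
          kappa (word (g ∘ Fin.castSucc)) < t ∧ t ≤ kappa (word g)},
        f (act (word g) x) ∂(μpi μ (n + 1)))) ∧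
    (∀ x : PX, Summable (fun n : ℕ =>
      ∫ g in {g : Fin (n + 1) → SL2 |
          t ≤ kappa (word (g ∘ Fin.castSucc)) ∧ kappa (word g) < t},
        f (act (word g) x) ∂(μpi μ (n + 1)))) ∧
    ∫ x, f x ∂ν =
      ∫ x,
        ((∑' n : ℕ, ∫ g in {g : Fin (n + 1) → SL2 |
            kappa (word (g ∘ Fin.castSucc)) < t ∧ t ≤ kappa (word g)},
          f (act (word g) x) ∂(μpi μ (n + 1))) -
         (∑' n : ℕ, ∫ g in {g : Fin (n + 1) → SL2 |
            t ≤ kappa (word (g ∘ Fin.castSucc)) ∧ kappa (word g) < t},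
          f (act (word g) x) ∂(μpi μ (n + 1)))) ∂ν :=
  stopping_time_identity_general μ hzd ν hstat t ht f hf

end
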